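/- arXiv:2512.17295 — 2 statements merged into one kernel-verified Lean document; each statement's English description precedes it below -/
import Mathlib

section
/- State transition from (S2): if the pair of SpaceSaving states on neighboring streams is in state (S2) at time t−1 (with t−1 ≥ i and t ≤ T), then after processing the common update x_t the pair is in state (S1), (S2), or (S3) at time t. -/
/-- State of the SpaceSaving algorithm: tracked set, counters (0 for untracked
items), and recency (last occurrence time, 0 if never seen). -/
structure SSState (α : Type) where
  tracked : Finset α
  count : α → ℕ
  recency : α → ℕ

variable {α : Type} [LinearOrder α]

/-- The set of tracked items of minimum counter value. -/
def ssMinSet (s : SSState α) : Finset α :=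
  s.tracked.filter (fun a => ∀ b ∈ s.tracked, s.count a ≤ s.count b)

/-- The eviction victim: among tracked items of minimum counter value, the one
with the largest recency (ties in recency broken by the order on `α`). -/
def ssEvict (s : SSState α) : Option α :=
  if h : ((ssMinSet s).filter (fun a => ∀ b ∈ ssMinSet s, s.recency b ≤ s.recency a)).Nonempty
  then some (((ssMinSet s).filter (fun a => ∀ b ∈ ssMinSet s, s.recency b ≤ s.recency a)).max' h)
  else none

/-- One step of SpaceSaving with capacity `k` at time `t`; a `none` update
contributes nothing. -/
def ssStep (k t : ℕ) (s : SSState α) : Option α → SSState α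
  | none => s
  | some x =>
    if x ∈ s.tracked then
      ⟨s.tracked, Function.update s.count x (s.count x + 1), Function.update s.recency x t⟩
    else if s.tracked.card < k then
      ⟨insert x s.tracked, Function.update s.count x 1, Function.update s.recency x t⟩
    else
      match ssEvict s with
      | none => s
      | some y =>
        ⟨insert x (s.tracked.erase y),
         Function.update (Function.update s.count y 0) x (s.count y + 1),
         Function.update s.recency x t⟩

def ssRunAux (k : ℕ) : SSState α → ℕ → List (Option α) → SSState α
  | s, _, [] => s
  | s, t, x :: xs => ssRunAux k (ssStep k t s x) (t + 1) xs

/-- Run SpaceSaving with capacity `k` on a stream (positions are 1-indexed). -/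
def ssRun (k : ℕ) (X : List (Option α)) : SSState α :=
  ssRunAux k ⟨∅, fun _ => 0, fun _ => 0⟩ 1 X

section NeighborStates

variable {α : Type} [LinearOrder α]

/-- State (S1) of the pair of SpaceSaving data structures on neighboring streams:
(a) the tracked sets coincide; (b) there is `y ∈ T` with `C[y] = C'[y] + 1`;
(c) all other tracked counters coincide. -/
def StateS1 (s s' : SSState α) : Prop :=
  s.tracked = s'.tracked ∧
  ∃ y ∈ s.tracked, s.count y = s'.count y + 1 ∧
    ∀ z ∈ s.tracked, z ≠ y → s.count z = s'.count z

/-- State (S2): (a) `T ≠ T'` with `T \ T' = {z}` and `T' \ T = {z'}`;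
(b) counters agree on `T ∩ T'`; (c) `C[z] = C'[z'] + 1`, `z'` attains the
minimum counter in `T'`, and `C[z] ≤ min_{a ∈ T} C[a] + 1`. -/
def StateS2 (s s' : SSState α) : Prop :=
  s.tracked ≠ s'.tracked ∧
  ∃ z z' : α,
    s.tracked \ s'.tracked = {z} ∧ s'.tracked \ s.tracked = {z'} ∧
    (∀ a ∈ s.tracked ∩ s'.tracked, s.count a = s'.count a) ∧
    s.count z = s'.count z' + 1 ∧
    (∀ a ∈ s'.tracked, s'.count z' ≤ s'.count a) ∧
    (∀ a ∈ s.tracked, s.count z ≤ s.count a + 1)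

/-- State (S3): (a) `T ≠ T'` with `T \ T' = {z}` and `T' \ T = {z'}`;
(b) there is `y ∈ T ∩ T'` with `C[y] = C'[y] + 1` and the counters agree on the
rest of the intersection; (c) `C[z] = C'[z']` and both attain the minimum
counter value of their respective tracked sets. -/
def StateS3 (s s' : SSState α) : Prop :=
  s.tracked ≠ s'.tracked ∧
  ∃ z z' : α,
    s.tracked \ s'.tracked = {z} ∧ s'.tracked \ s.tracked = {z'} ∧
    (∃ y ∈ s.tracked ∩ s'.tracked, s.count y = s'.count y + 1 ∧
      ∀ a ∈ s.tracked ∩ s'.tracked, a ≠ y → s.count a = s'.count a) ∧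
    s.count z = s'.count z' ∧
    (∀ a ∈ s.tracked, s.count z ≤ s.count a) ∧
    (∀ a ∈ s'.tracked, s'.count z' ≤ s'.count a)

/-- State (S4): (a) `T ≠ T'` with `T \ T' = {z₁, z₂}` and `T' \ T = {z₁', z₂'}`;
(b) counters agree on `T ∩ T'`;
(c) `C[z₁] − 1 = C[z₂] = C'[z₁'] = C'[z₂'] = min_{a∈T} C[a] = min_{a∈T'} C'[a]`;
(d) among the minimum-count items of `T'`, the one with largest recency (the
eviction victim of the primed run) belongs to `W' = T' \ T`. -/
def StateS4 (s s' : SSState α) : Prop :=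
  s.tracked ≠ s'.tracked ∧
  ∃ z₁ z₂ z₁' z₂' : α, z₁ ≠ z₂ ∧ z₁' ≠ z₂' ∧
    s.tracked \ s'.tracked = {z₁, z₂} ∧ s'.tracked \ s.tracked = {z₁', z₂'} ∧
    (∀ a ∈ s.tracked ∩ s'.tracked, s.count a = s'.count a) ∧
    s.count z₁ = s.count z₂ + 1 ∧
    s.count z₂ = s'.count z₁' ∧ s'.count z₁' = s'.count z₂' ∧
    (∀ a ∈ s.tracked, s.count z₂ ≤ s.count a) ∧
    (∀ a ∈ s'.tracked, s'.count z₁' ≤ s'.count a) ∧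
    (∃ w, ssEvict s' = some w ∧ w ∈ s'.tracked \ s.tracked)

end NeighborStates

variable {α : Type} [LinearOrder α]

/-- The SpaceSaving state after processing the first `t` positions of the
stream `X` (capacity `k`, positions 1-indexed). -/
def ssNbState (k : ℕ) (X : List α) (t : ℕ) : SSState α :=
  ssRun k ((X.map some).take t)

/-- The SpaceSaving state after processing the first `t` positions of the
neighboring stream `X′`, which is `X` with the single update at (1-indexed)
position `i` removed, i.e. replaced by an empty update contributing nothing. -/
def ssNbState' (k : ℕ) (X : List α) (i t : ℕ) : SSState α :=
  ssRun k (((X.map some).set (i - 1) none).take t)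

lemma mem_ssMinSet {s : SSState α} {a : α} :
    a ∈ ssMinSet s ↔ a ∈ s.tracked ∧ ∀ b ∈ s.tracked, s.count a ≤ s.count b := by
  rw [ssMinSet, Finset.mem_filter]

/-- The eviction victim is a tracked item of minimum count, and it is maximal in the lexicographic
order on (recency, item) among those. -/
lemma ssEvict_eq_some {s : SSState α} {y : α} (h : ssEvict s = some y) :
    y ∈ s.tracked ∧ (∀ b ∈ s.tracked, s.count y ≤ s.count b) ∧
    ∀ b ∈ s.tracked, s.count b ≤ s.count y →
      s.recency b ≤ s.recency y ∧ (s.recency b = s.recency y → b ≤ y) := by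
  unfold ssEvict at h
  split_ifs at h with hne
  rw [Option.some.injEq] at h
  have hmem := Finset.max'_mem _ hne
  rw [h] at hmem
  simp only [Finset.mem_filter, mem_ssMinSet] at hmem
  obtain ⟨⟨hy, hmin⟩, hrec⟩ := hmem
  refine ⟨hy, hmin, fun b hb hby => ?_⟩
  have hbmin : ∀ c ∈ s.tracked, s.count b ≤ s.count c := fun c hc => hby.trans (hmin c hc)
  refine ⟨hrec b ⟨hb, hbmin⟩, fun heq => ?_⟩
  rw [← h]
  apply Finset.le_max'
  simp only [Finset.mem_filter, mem_ssMinSet]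
  exact ⟨⟨hb, hbmin⟩, fun c hc => heq ▸ hrec c hc⟩

lemma ssEvict_isSome {s : SSState α} (h : s.tracked.Nonempty) : ∃ y, ssEvict s = some y := by
  obtain ⟨a, ha, hmin⟩ := s.tracked.exists_min_image s.count h
  have hM : (ssMinSet s).Nonempty := ⟨a, mem_ssMinSet.2 ⟨ha, hmin⟩⟩
  obtain ⟨b, hb, hmax⟩ := (ssMinSet s).exists_max_image s.recency hM
  have hne : ((ssMinSet s).filter
      (fun a => ∀ b ∈ ssMinSet s, s.recency b ≤ s.recency a)).Nonempty :=
    ⟨b, Finset.mem_filter.2 ⟨hb, hmax⟩⟩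
  exact ⟨_, dif_pos hne⟩

lemma ssStep_of_mem {k t : ℕ} {s : SSState α} {x : α} (hx : x ∈ s.tracked) :
    ssStep k t s (some x) =
      ⟨s.tracked, Function.update s.count x (s.count x + 1), Function.update s.recency x t⟩ := by
  simp [ssStep, hx]

lemma ssStep_of_evict {k t : ℕ} {s : SSState α} {x y : α} (hx : x ∉ s.tracked)
    (hk : k ≤ s.tracked.card) (hy : ssEvict s = some y) :
    ssStep k t s (some x) =
      ⟨insert x (s.tracked.erase y),
         Function.update (Function.update s.count y 0) x (s.count y + 1),
         Function.update s.recency x t⟩ := by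
  simp [ssStep, hx, hk.not_gt, hy]

lemma ssRunAux_append (k : ℕ) (s : SSState α) (t : ℕ) (L : List (Option α)) (x : Option α) :
    ssRunAux k s t (L ++ [x]) = ssStep k (t + L.length) (ssRunAux k s t L) x := by
  induction L generalizing s t with
  | nil => rfl
  | cons a L ih =>
    simp only [List.cons_append, ssRunAux, ih, List.length_cons]
    congr 1
    omega

lemma ssRun_append (k : ℕ) (L : List (Option α)) (x : Option α) :
    ssRun k (L ++ [x]) = ssStep k (L.length + 1) (ssRun k L) x := by
  rw [ssRun, ssRunAux_append, add_comm]
  rfl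

lemma ssRun_take_succ (k : ℕ) (L : List (Option α)) (t : ℕ) (ht : t < L.length) :
    ssRun k (L.take (t + 1)) = ssStep k (t + 1) (ssRun k (L.take t)) L[t] := by
  rw [← List.take_concat_get' L t ht, ssRun_append, List.length_take, min_eq_left ht.le]

/-- Tracked items occur in the stream, and all items of the stream are tracked below capacity. -/
lemma ssRun_tracked (k : ℕ) (L : List (Option α)) :
    (∀ a ∈ (ssRun k L).tracked, some a ∈ L) ∧
    ((ssRun k L).tracked.card < k → ∀ a, some a ∈ L → a ∈ (ssRun k L).tracked) := by
  induction L using List.reverseRecOn with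
  | nil => simp [ssRun, ssRunAux]
  | append_singleton L o ih =>
    rw [ssRun_append]
    generalize ssRun k L = s at ih
    obtain ⟨ih₁, ih₂⟩ := ih
    cases o with
    | none => simpa [ssStep] using ⟨ih₁, ih₂⟩
    | some x =>
      by_cases hx : x ∈ s.tracked
      · rw [ssStep_of_mem hx]
        grind
      by_cases hk : s.tracked.card < k
      · simp only [ssStep, hx, hk, if_true, if_false]
        grind
      cases hy : ssEvict s with
      | none =>
        simp only [ssStep, hx, hk, if_false, hy]
        grind
      | some y =>
        rw [ssStep_of_evict hx (not_lt.1 hk) hy]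
        have hcard : (insert x (s.tracked.erase y)).card = s.tracked.card := by
          rw [Finset.card_insert_of_notMem (by simp [hx]),
            Finset.card_erase_add_one (ssEvict_eq_some hy).1]
        simp only [hcard]
        grind

/-- The recencies agree on every item tracked in both states with the same count. -/
def RecencyAgrees (s s' : SSState α) : Prop :=
  ∀ b ∈ s.tracked, b ∈ s'.tracked → s.count b = s'.count b → s.recency b = s'.recency b

lemma ssStep_of_ne {k t : ℕ} {s : SSState α} {x b : α} (hb : b ≠ x)
    (h : b ∈ (ssStep k t s (some x)).tracked) :
    b ∈ s.tracked ∧ (ssStep k t s (some x)).count b = s.count b ∧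
      (ssStep k t s (some x)).recency b = s.recency b := by
  simp only [ssStep] at h ⊢
  split_ifs at h ⊢
  · simp_all
  · simp_all
  · cases hy : ssEvict s <;> simp_all

lemma ssStep_recency_self {k t : ℕ} {s : SSState α} {x : α}
    (h : x ∈ (ssStep k t s (some x)).tracked) :
    (ssStep k t s (some x)).recency x = t := by
  simp only [ssStep] at h ⊢
  split_ifs at h ⊢
  · simp_all
  · simp_all
  · cases hy : ssEvict s <;> simp_all

lemma RecencyAgrees.step {s s' : SSState α} (h : RecencyAgrees s s') (k t : ℕ) (x : α) :
    RecencyAgrees (ssStep k t s (some x)) (ssStep k t s' (some x)) := by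
  intro b hb hb' hc
  by_cases hx : b = x
  · subst hx
    rw [ssStep_recency_self hb, ssStep_recency_self hb']
  · obtain ⟨h₁, h₂, h₃⟩ := ssStep_of_ne hx hb
    obtain ⟨h₁', h₂', h₃'⟩ := ssStep_of_ne hx hb'
    rw [h₃, h₃']
    exact h b h₁ h₁' (by rw [← h₂, ← h₂', hc])

lemma recencyAgrees_step_left (s : SSState α) (k t : ℕ) (x : α) :
    RecencyAgrees (ssStep k t s (some x)) s := by
  intro b hb hb' hc
  by_cases hx : b = x
  · subst hx
    simp [ssStep_of_mem hb'] at hc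
  · exact (ssStep_of_ne hx hb).2.2

lemma recencyAgrees_ssNbState (k : ℕ) (X : List α) (i t : ℕ) (hi : 1 ≤ i) (hit : i ≤ t)
    (ht : t ≤ X.length) : RecencyAgrees (ssNbState k X t) (ssNbState' k X i t) := by
  induction t, hit using Nat.le_induction with
  | base =>
    obtain ⟨j, rfl⟩ : ∃ j, i = j + 1 := ⟨i - 1, by omega⟩
    rw [ssNbState, ssNbState', ssRun_take_succ _ _ _ (by simpa using ht),
      ssRun_take_succ _ _ _ (by simpa using ht)]
    simpa [ssStep, List.take_set_of_le] using recencyAgrees_step_left _ k (j + 1) X[j]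
  | succ t hit ih =>
    have := (ih (by omega)).step k (t + 1) X[t]
    rw [ssNbState, ssNbState', ssRun_take_succ _ _ _ (by simpa using ht),
      ssRun_take_succ _ _ _ (by simpa using ht), List.getElem_set_ne (by omega), List.getElem_map]
    exact this

/-- One common update from (S2), when both tracked sets are full. -/
lemma StateS2.step {s s' : SSState α} (h : StateS2 s s') (hτ : RecencyAgrees s s') {k : ℕ} (t : ℕ)
    (hk : k ≤ s.tracked.card) (hk' : k ≤ s'.tracked.card) (x : α) :
    StateS1 (ssStep k t s (some x)) (ssStep k t s' (some x)) ∨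
    StateS2 (ssStep k t s (some x)) (ssStep k t s' (some x)) ∨
    StateS3 (ssStep k t s (some x)) (ssStep k t s' (some x)) := by
  obtain ⟨-, z, z', hz, hz', hC, hzC, hmin', hmin⟩ := h
  have hz₁ : ∀ a, (a ∈ s.tracked ∧ a ∉ s'.tracked) ↔ a = z := fun a => by
    rw [← Finset.mem_sdiff, hz, Finset.mem_singleton]
  have hz₂ : ∀ a, (a ∈ s'.tracked ∧ a ∉ s.tracked) ↔ a = z' := fun a => by
    rw [← Finset.mem_sdiff, hz', Finset.mem_singleton]
  simp only [Finset.mem_inter, and_imp] at hC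
  clear hz hz'
  obtain ⟨hzT, hzT'⟩ := (hz₁ z).2 rfl
  obtain ⟨hzT₂, hzT₂'⟩ := (hz₂ z').2 rfl
  obtain ⟨y, hy⟩ := ssEvict_isSome ⟨z, hzT⟩
  obtain ⟨y', hy'⟩ := ssEvict_isSome ⟨z', hzT₂⟩
  obtain ⟨hyT, hymin, hyrec⟩ := ssEvict_eq_some hy
  obtain ⟨hyT', hymin', hyrec'⟩ := ssEvict_eq_some hy'
  have hne : ∀ {S S' : Finset α} {w : α}, S \ S' = {w} → S ≠ S' := by
    rintro S _ w h rfl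
    simp at h
  have hyz := hymin z hzT
  have hyz' := hymin' z' hzT₂
  have hy'z' := hmin' y' hyT'
  by_cases hx : x ∈ s.tracked <;> by_cases hx' : x ∈ s'.tracked
  · rw [ssStep_of_mem hx, ssStep_of_mem hx']
    have hd : s.tracked \ s'.tracked = {z} := by grind
    refine .inr (.inl ⟨hne hd, z, z', hd, by grind, ?_, ?_, ?_, ?_⟩) <;> grind
  · obtain rfl : x = z := (hz₁ x).1 ⟨hx, hx'⟩
    rw [ssStep_of_mem hx, ssStep_of_evict hx' hk' hy']
    by_cases hyz : y' = z'
    · subst hyz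
      exact .inl ⟨by grind, x, by grind, by grind, by grind⟩
    · have hd : s.tracked \ insert x (s'.tracked.erase y') = {y'} := by grind
      refine .inr (.inr ⟨hne hd, y', z', hd, by grind, ⟨x, ?_, ?_, ?_⟩, ?_, ?_, ?_⟩) <;> grind
  · obtain rfl : x = z' := (hz₂ x).1 ⟨hx', hx⟩
    rw [ssStep_of_mem hx', ssStep_of_evict hx hk hy]
    by_cases hyz : y = z
    · subst hyz
      exact .inl ⟨by grind, x, by grind, by grind, by grind⟩
    · have hd : insert x (s.tracked.erase y) \ s'.tracked = {z} := by grind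
      by_cases hm : s.count y = s'.count x
      · refine .inr (.inl ⟨hne hd, z, y, hd, by grind, ?_, ?_, ?_, ?_⟩) <;> grind
      · refine .inr (.inr ⟨hne hd, z, y, hd, by grind, ⟨x, ?_, ?_, ?_⟩, ?_, ?_, ?_⟩) <;> grind
  · rw [ssStep_of_evict hx hk hy, ssStep_of_evict hx' hk' hy']
    by_cases hyz : y = z
    · obtain rfl : y' = z' := by grind
      subst hyz
      exact .inl ⟨by grind, x, by grind, by grind, by grind⟩
    by_cases hm : s.count y = s'.count z'
    · by_cases hyz' : y' = z'
      · have hd : insert x (s.tracked.erase y) \ insert x (s'.tracked.erase y') = {z} := by grind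
        refine .inr (.inl ⟨hne hd, z, y, hd, by grind, ?_, ?_, ?_, ?_⟩) <;> grind
      · obtain rfl : y' = y := by
          have h₁ := hτ y hyT (by grind) (by grind)
          have h₂ := hτ y' (by grind) (by grind) (by grind)
          have h₃ := hyrec y' (by grind) (by grind)
          have h₄ := hyrec' y (by grind) (by grind)
          exact le_antisymm (h₃.2 (by omega)) (h₄.2 (by omega))
        have hd : insert x (s.tracked.erase y') \ insert x (s'.tracked.erase y') = {z} := by grind
        refine .inr (.inl ⟨hne hd, z, z', hd, by grind, ?_, ?_, ?_, ?_⟩) <;> grind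
    · obtain rfl : y' = z' := by grind
      have hd : insert x (s.tracked.erase y) \ insert x (s'.tracked.erase y') = {z} := by grind
      refine .inr (.inr ⟨hne hd, z, y, hd, by grind, ⟨x, ?_, ?_, ?_⟩, ?_, ?_, ?_⟩) <;> grind

/-- **State transition from (S2).**  If the pair of SpaceSaving states on neighboring streams is in state (S2) at time `t` (with `t ≥ i` and `t + 1 ≤ T`), then after processing the common update at position `t + 1` the pair is in state (S1), (S2), or (S3). -/
theorem ss_transition_S2 {α : Type} [LinearOrder α] (k : ℕ) (hk : 1 ≤ k)
    (X : List α) (i : ℕ) (hi1 : 1 ≤ i) (hi2 : i ≤ X.length)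
    (t : ℕ) (ht1 : i ≤ t) (ht2 : t + 1 ≤ X.length)
    (h : StateS2 (ssNbState k X t) (ssNbState' k X i t)) :
    StateS1 (ssNbState k X (t + 1)) (ssNbState' k X i (t + 1)) ∨
    StateS2 (ssNbState k X (t + 1)) (ssNbState' k X i (t + 1)) ∨
    StateS3 (ssNbState k X (t + 1)) (ssNbState' k X i (t + 1)) := by
  have hτ := recencyAgrees_ssNbState k X i t hi1 ht1 (by omega)
  have hsub : ∀ a, some a ∈ ((X.map some).set (i - 1) none).take t →
      some a ∈ (X.map some).take t := fun a ha => by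
    rw [List.take_set] at ha
    simpa using List.mem_or_eq_of_mem_set ha
  have hcard : (ssNbState k X t).tracked.card = (ssNbState' k X i t).tracked.card := by
    obtain ⟨-, z, z', hz, hz', -⟩ := h
    rw [← Finset.card_sdiff_add_card_inter, hz, Finset.inter_comm,
      ← Finset.card_sdiff_add_card_inter (ssNbState' k X i t).tracked, hz']
    simp
  have hfull : k ≤ (ssNbState k X t).tracked.card := by
    by_contra! hlt
    obtain ⟨-, z, z', -, hz', -⟩ := h
    have hmem : z' ∈ (ssNbState' k X i t).tracked \ (ssNbState k X t).tracked := by simp [hz']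
    rw [Finset.mem_sdiff] at hmem
    exact hmem.2 ((ssRun_tracked k _).2 hlt z' (hsub z' ((ssRun_tracked k _).1 z' hmem.1)))
  have hstep := h.step hτ (t + 1) hfull (hcard ▸ hfull) X[t]
  have hX : ssNbState k X (t + 1) = ssStep k (t + 1) (ssNbState k X t) (some X[t]) := by
    rw [ssNbState, ssRun_take_succ _ _ _ (by simpa using ht2), List.getElem_map]
    rfl
  have hX' : ssNbState' k X i (t + 1) = ssStep k (t + 1) (ssNbState' k X i t) (some X[t]) := by
    rw [ssNbState', ssRun_take_succ _ _ _ (by simpa using ht2), List.getElem_set_ne (by omega),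
      List.getElem_map]
    rfl
  rwa [hX, hX']
end

section
/- Accuracy of differentially private SpaceSaving: run SpaceSaving with capacity k̃ = 2k on a stream X, and add to each terminal counter C[x] independent noise η_x with the Laplace distribution of scale 1/ε. Then for any tracked item x with true frequency f_x, with probability at least 1 − δ, f_x − (1/ε)·ln(1/δ) ≤ C[x] + η_x ≤ f_x + |X|/(2k) + (1/ε)·ln(1/δ). -/
variable {α : Type} [LinearOrder α]

open MeasureTheory

/-- The Laplace distribution with scale `b`: the measure on `ℝ` with density
`x ↦ (1 / (2b)) · exp (−|x| / b)` with respect to Lebesgue measure. -/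
noncomputable def laplaceMeasure (b : ℝ) : Measure ℝ :=
  volume.withDensity fun x => ENNReal.ofReal ((1 / (2 * b)) * Real.exp (-|x| / b))

/-- The SpaceSaving invariant relating a state to the list of items processed so far. -/
structure SSInvariant (K : ℕ) (s : SSState α) (X : List α) : Prop where
  card_le : s.tracked.card ≤ K
  sum_count : ∑ a ∈ s.tracked, s.count a = X.length
  le_count : ∀ a ∈ s.tracked, X.count a ≤ s.count a
  untracked_le : ∀ a ∉ s.tracked, ∀ b ∈ s.tracked, X.count a ≤ s.count b
  untracked_eq_zero : s.tracked.card < K → ∀ a ∉ s.tracked, X.count a = 0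
  count_le : ∀ a ∈ s.tracked, K * s.count a ≤ K * X.count a + X.length

lemma exists_ssEvict_eq_some {s : SSState α} (h : s.tracked.Nonempty) :
    ∃ y ∈ s.tracked, ssEvict s = some y ∧ ∀ b ∈ s.tracked, s.count y ≤ s.count b := by
  obtain ⟨m, hm, hmin⟩ := s.tracked.exists_min_image s.count h
  have hmem : m ∈ ssMinSet s := by simp only [ssMinSet, Finset.mem_filter]; exact ⟨hm, hmin⟩
  obtain ⟨r, hr, hmax⟩ := (ssMinSet s).exists_max_image s.recency ⟨m, hmem⟩
  have hne : ((ssMinSet s).filter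
      (fun a => ∀ b ∈ ssMinSet s, s.recency b ≤ s.recency a)).Nonempty :=
    ⟨r, Finset.mem_filter.2 ⟨hr, hmax⟩⟩
  have hvictim := Finset.mem_filter.1 (Finset.mem_filter.1 (Finset.max'_mem _ hne)).1
  exact ⟨_, hvictim.1, by rw [ssEvict, dif_pos hne], hvictim.2⟩

lemma SSInvariant.step {K : ℕ} (hK : 0 < K) {s : SSState α} {X : List α}
    (h : SSInvariant K s X) (t : ℕ) (x : α) :
    SSInvariant K (ssStep K t s (some x)) (X ++ [x]) := by
  obtain ⟨hcard, hsum, hle, hunt, hzero, hup⟩ := h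
  have hcount : ∀ a, (X ++ [x]).count a = X.count a + if a = x then 1 else 0 := by
    intro a
    by_cases hax : a = x
    · simp [hax]
    · simp [hax, Ne.symm hax]
  have hlen : (X ++ [x]).length = X.length + 1 := by simp
  unfold ssStep
  by_cases hx : x ∈ s.tracked
  · simp only [hx, if_true]
    refine ⟨hcard, ?_, ?_, ?_, ?_, ?_⟩
    · rw [hlen, ← hsum, Finset.sum_update_of_mem hx, ← Finset.add_sum_erase _ _ hx,
        Finset.sdiff_singleton_eq_erase]
      ring
    · intro a ha
      have := hle a ha
      simp only [hcount, Function.update_apply]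
      split_ifs with hax
      · subst hax; omega
      · omega
    · intro a ha b hb
      have := hunt a ha b hb
      have hax : a ≠ x := fun e => ha (e ▸ hx)
      simp only [hcount, Function.update_apply, hax, if_false]
      split_ifs with hbx
      · subst hbx; omega
      · omega
    · intro hlt a ha
      have hax : a ≠ x := fun e => ha (e ▸ hx)
      simp [hcount, hax, hzero hlt a ha]
    · intro a ha
      have := hup a ha
      simp only [hcount, hlen, Function.update_apply]
      split_ifs with hax
      · subst hax; nlinarith
      · rw [add_zero]; omega
  simp only [hx, if_false]
  by_cases hlt : s.tracked.card < K
  · simp only [hlt, if_true]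
    have hx0 := hzero hlt x hx
    refine ⟨?_, ?_, ?_, ?_, ?_, ?_⟩
    · rw [Finset.card_insert_of_notMem hx]; exact hlt
    · rw [hlen, ← hsum, Finset.sum_insert hx, Finset.sum_update_of_notMem hx]
      simp [add_comm]
    · intro a ha
      simp only [hcount, Function.update_apply]
      split_ifs with hax
      · subst hax; omega
      · simpa using hle a (Finset.mem_of_mem_insert_of_ne ha hax)
    · intro a ha b _
      rw [Finset.mem_insert, not_or] at ha
      simp [hcount, ha.1, hzero hlt a ha.2]
    · intro _ a ha
      rw [Finset.mem_insert, not_or] at ha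
      simp [hcount, ha.1, hzero hlt a ha.2]
    · intro a ha
      simp only [hcount, hlen, Function.update_apply]
      split_ifs with hax
      · subst hax; nlinarith
      · have := hup a (Finset.mem_of_mem_insert_of_ne ha hax)
        rw [add_zero]; omega
  simp only [hlt, if_false]
  have hfull : s.tracked.card = K := le_antisymm hcard (not_lt.1 hlt)
  obtain ⟨y, hy, hevict, hmin⟩ :=
    exists_ssEvict_eq_some (s := s) (Finset.card_pos.1 (hfull ▸ hK))
  have hxy : x ≠ y := fun e => hx (e ▸ hy)
  have hxe : x ∉ s.tracked.erase y := fun hm => hx (Finset.mem_of_mem_erase hm)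
  have hmul : K * s.count y ≤ X.length := by
    rw [← hsum, ← hfull, ← smul_eq_mul]
    exact Finset.card_nsmul_le_sum _ _ _ hmin
  have hold : ∀ a ∈ insert x (s.tracked.erase y), a ≠ x → a ≠ y ∧ a ∈ s.tracked :=
    fun a ha hax => Finset.mem_erase.1 (Finset.mem_of_mem_insert_of_ne ha hax)
  simp only [hevict]
  have hcard' : (insert x (s.tracked.erase y)).card = K := by
    rw [Finset.card_insert_of_notMem hxe, Finset.card_erase_add_one hy, hfull]
  refine ⟨hcard'.le, ?_, ?_, ?_, ?_, ?_⟩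
  · rw [hlen, ← hsum, Finset.sum_insert hxe, Finset.sum_update_of_notMem hxe,
      Finset.sum_update_of_notMem (Finset.notMem_erase y _), ← Finset.add_sum_erase _ _ hy]
    simp only [Function.update_self]
    ring
  · intro a ha
    simp only [hcount, Function.update_apply]
    split_ifs with hax hay
    · subst hax; have := hunt a hx y hy; omega
    · exact absurd hay (hold a ha hax).1
    · simpa using hle a (hold a ha hax).2
  · intro a ha b hb
    rw [Finset.mem_insert, not_or] at ha
    have hay : X.count a ≤ s.count y := by
      by_cases e : a = y
      · subst e; exact hle a hy
      · exact hunt a (fun hm => ha.2 (Finset.mem_erase.2 ⟨e, hm⟩)) y hy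
    simp only [hcount, Function.update_apply, ha.1, if_false]
    split_ifs with hbx hby
    · omega
    · exact absurd hby (hold b hb hbx).1
    · have := hmin b (hold b hb hbx).2
      omega
  · intro hlt'
    exact absurd hlt' hcard'.not_lt
  · intro a ha
    simp only [hcount, hlen, Function.update_apply]
    split_ifs with hax hay
    · nlinarith
    · exact absurd hay (hold a ha hax).1
    · have := hup a (hold a ha hax).2
      rw [add_zero]; omega

lemma SSInvariant.runAux {K : ℕ} (hK : 0 < K) (Y : List α) :
    ∀ {s : SSState α} {X : List α} (t : ℕ), SSInvariant K s X →
      SSInvariant K (ssRunAux K s t (Y.map some)) (X ++ Y) := by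
  induction Y with
  | nil => intro s X t h; simpa [ssRunAux] using h
  | cons y Y ih =>
    intro s X t h
    simpa [ssRunAux] using ih (t + 1) (h.step hK t y)

lemma ssInvariant_ssRun {K : ℕ} (hK : 0 < K) (X : List α) :
    SSInvariant K (ssRun K (X.map some)) X := by
  have h : SSInvariant K (⟨∅, fun _ => 0, fun _ => 0⟩ : SSState α) [] := by
    constructor <;> simp
  exact h.runAux hK X 1

lemma integral_laplace_density {b t : ℝ} (hb : 0 < b) (ht : 0 ≤ t) :
    ∫ x in (-t)..t, 1 / (2 * b) * Real.exp (-|x| / b) = 1 - Real.exp (-t / b) := by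
  have hcont : Continuous fun x : ℝ => 1 / (2 * b) * Real.exp (-|x| / b) := by fun_prop
  have hleft : ∫ x in (-t)..0, 1 / (2 * b) * Real.exp (-|x| / b) =
      1 / 2 * Real.exp (0 / b) - 1 / 2 * Real.exp (-t / b) := by
    refine intervalIntegral.integral_eq_sub_of_hasDerivAt_of_le
      (f := fun x => 1 / 2 * Real.exp (x / b)) (by linarith) (by fun_prop) (fun x hx => ?_)
      (hcont.intervalIntegrable _ _)
    rw [abs_of_neg hx.2, neg_neg]
    refine (((hasDerivAt_id' x).div_const b).exp.const_mul (1 / 2)).congr_deriv ?_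
    field_simp
  have hright : ∫ x in (0)..t, 1 / (2 * b) * Real.exp (-|x| / b) =
      -(1 / 2) * Real.exp (-t / b) - -(1 / 2) * Real.exp (-0 / b) := by
    refine intervalIntegral.integral_eq_sub_of_hasDerivAt_of_le
      (f := fun x => -(1 / 2) * Real.exp (-x / b)) ht (by fun_prop) (fun x hx => ?_)
      (hcont.intervalIntegrable _ _)
    rw [abs_of_pos hx.1]
    refine (((hasDerivAt_id' x).fun_neg.div_const b).exp.const_mul (-(1 / 2))).congr_deriv ?_
    field_simp
  rw [← intervalIntegral.integral_add_adjacent_intervals (hcont.intervalIntegrable _ 0)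
    (hcont.intervalIntegrable _ _), hleft, hright]
  simp
  ring

lemma laplaceMeasure_Icc {b t : ℝ} (hb : 0 < b) (ht : 0 ≤ t) :
    laplaceMeasure b (Set.Icc (-t) t) = ENNReal.ofReal (1 - Real.exp (-t / b)) := by
  have hcont : Continuous fun x : ℝ => 1 / (2 * b) * Real.exp (-|x| / b) := by fun_prop
  rw [laplaceMeasure, withDensity_apply _ measurableSet_Icc,
    ← ofReal_integral_eq_lintegral_ofReal hcont.integrableOn_Icc
      (Filter.Eventually.of_forall fun x => by positivity),
    integral_Icc_eq_integral_Ioc, ← intervalIntegral.integral_of_le (by linarith),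
    integral_laplace_density hb ht]


/-- **Accuracy of differentially private SpaceSaving.**  Run SpaceSaving with
capacity `k̃ = 2k` on a stream `X` and add independent `Laplace (1/ε)` noise
`η_x` to each terminal counter `C[x]`.  Then for any tracked item `x` with
true frequency `f_x`, with probability at least `1 − δ`,
`f_x − (1/ε) ln (1/δ) ≤ C[x] + η_x ≤ f_x + |X|/(2k) + (1/ε) ln (1/δ)`. -/
theorem DPSS_accuracy {α : Type} [LinearOrder α] (k : ℕ) (hk : 1 ≤ k)
    (ε δ : ℝ) (hε : 0 < ε) (hδ0 : 0 < δ) (hδ1 : δ < 1) (X : List α) :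
    ∀ x ∈ (ssRun (2 * k) (X.map some)).tracked,
      ENNReal.ofReal (1 - δ) ≤
        laplaceMeasure (1 / ε)
          {z : ℝ |
            (X.count x : ℝ) - (1 / ε) * Real.log (1 / δ) ≤
                ((ssRun (2 * k) (X.map some)).count x : ℝ) + z ∧
            ((ssRun (2 * k) (X.map some)).count x : ℝ) + z ≤
                (X.count x : ℝ) + (X.length : ℝ) / (2 * (k : ℝ)) +
                  (1 / ε) * Real.log (1 / δ)} := by
  intro x hx
  have hinv := ssInvariant_ssRun (K := 2 * k) (by omega) X
  have hlow : (X.count x : ℝ) ≤ (ssRun (2 * k) (X.map some)).count x :=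
    mod_cast hinv.le_count x hx
  have hhigh : ((ssRun (2 * k) (X.map some)).count x : ℝ) ≤
      X.count x + X.length / (2 * (k : ℝ)) := by
    have hk' : (0 : ℝ) < 2 * k := by positivity
    have hcast : 2 * (k : ℝ) * (ssRun (2 * k) (X.map some)).count x ≤
        2 * k * X.count x + X.length := mod_cast hinv.count_le x hx
    rw [← sub_le_iff_le_add', le_div_iff₀ hk']
    linarith
  have hlog : 0 ≤ 1 / ε * Real.log (1 / δ) :=
    mul_nonneg (by positivity) (Real.log_nonneg ((one_le_div hδ0).2 hδ1.le))
  have hexp : Real.exp (-(1 / ε * Real.log (1 / δ)) / (1 / ε)) = δ := by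
    rw [neg_div, mul_div_cancel_left₀ _ (by positivity), one_div, Real.log_inv, neg_neg,
      Real.exp_log hδ0]
  calc ENNReal.ofReal (1 - δ)
      = laplaceMeasure (1 / ε)
          (Set.Icc (-(1 / ε * Real.log (1 / δ))) (1 / ε * Real.log (1 / δ))) := by
        rw [laplaceMeasure_Icc (by positivity) hlog, hexp]
    _ ≤ _ := by
        refine measure_mono fun z hz => ⟨?_, ?_⟩
        · linarith [hz.1]
        · linarith [hz.2]
end
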